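/- Let L = 2π and φ(x) = (1 − cos x)/√(3π). Let y be a classical solution of the nonlinear KdV system on [0,T], and define p(t) = ∫₀^{2π} y(t,x) φ(x) dx. Then p is differentiable on (0,T) and p′(t) = (1/2) ∫₀^{2π} y(t,x)² φ′(x) dx for all t ∈ (0,T). -/

import Mathlib

open Set Real MeasureTheory

/-- The normalized kernel eigenfunction `φ(x) = (1 − cos x)/√(3π)` of the linear KdV
operator at the critical length `L = 2π`. -/
noncomputable def phiKdV (x : ℝ) : ℝ := (1 - Real.cos x) / Real.sqrt (3 * Real.pi)

/-- A classical solution of the nonlinear KdV system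
`y_t + y_x + y y_x + y_xxx = 0`, `y(t,0) = y(t,L) = y_x(t,L) = 0`, on `[0,T] × [0,L]`. -/
def IsNonlinearKdVSol (L T : ℝ) (y : ℝ → ℝ → ℝ) : Prop :=
  (∀ t ∈ Icc (0:ℝ) T, ContDiffOn ℝ 3 (y t) (Icc (0:ℝ) L)) ∧
  (∀ x ∈ Icc (0:ℝ) L, ContDiffOn ℝ 1 (fun s => y s x) (Icc (0:ℝ) T)) ∧
  ContinuousOn (fun p : ℝ × ℝ => y p.1 p.2) (Icc (0:ℝ) T ×ˢ Icc (0:ℝ) L) ∧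
  (∀ t ∈ Ioo (0:ℝ) T, ∀ x ∈ Ioo (0:ℝ) L,
    derivWithin (fun s => y s x) (Icc (0:ℝ) T) t
      + derivWithin (y t) (Icc (0:ℝ) L) x
      + y t x * derivWithin (y t) (Icc (0:ℝ) L) x
      + iteratedDerivWithin 3 (y t) (Icc (0:ℝ) L) x = 0) ∧
  (∀ t ∈ Icc (0:ℝ) T,
    y t 0 = 0 ∧ y t L = 0 ∧ derivWithin (y t) (Icc (0:ℝ) L) L = 0)

open Filter Topology

/-- Bounded measurable real functions. -/
def KdvBM {X : Type*} [MeasurableSpace X] (f : X → ℝ) : Prop :=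
  Measurable f ∧ ∃ M, ∀ x, |f x| ≤ M

namespace KdvBM
variable {X : Type*} [MeasurableSpace X] {f g : X → ℝ}

lemma add (hf : KdvBM f) (hg : KdvBM g) : KdvBM (fun x => f x + g x) := by
  obtain ⟨hf, M, hM⟩ := hf
  obtain ⟨hg, N, hN⟩ := hg
  exact ⟨hf.add hg, M + N, fun x => (abs_add_le _ _).trans (add_le_add (hM x) (hN x))⟩

lemma neg (hf : KdvBM f) : KdvBM (fun x => - f x) := by
  obtain ⟨hf, M, hM⟩ := hf
  exact ⟨hf.neg, M, fun x => by rw [abs_neg]; exact hM x⟩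

lemma sub (hf : KdvBM f) (hg : KdvBM g) : KdvBM (fun x => f x - g x) := by
  simpa [sub_eq_add_neg] using hf.add hg.neg

lemma mul (hf : KdvBM f) (hg : KdvBM g) : KdvBM (fun x => f x * g x) := by
  obtain ⟨hf, M, hM⟩ := hf
  obtain ⟨hg, N, hN⟩ := hg
  refine ⟨hf.mul hg, M * N, fun x => ?_⟩
  rw [abs_mul]
  exact mul_le_mul (hM x) (hN x) (abs_nonneg _) ((abs_nonneg _).trans (hM x))

lemma const (c : ℝ) : KdvBM (fun _ : X => c) := ⟨measurable_const, |c|, fun _ => le_rfl⟩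

lemma sq (hf : KdvBM f) : KdvBM (fun x => f x ^ 2) := by
  simpa [pow_two] using hf.mul hf

lemma abs (hf : KdvBM f) : KdvBM (fun x => |f x|) := by
  obtain ⟨hf, M, hM⟩ := hf
  exact ⟨hf.abs, M, fun x => by rw [abs_abs]; exact hM x⟩

lemma min_const (hf : KdvBM f) (R : ℝ) : KdvBM (fun x => min (f x) R) := by
  obtain ⟨hf, M, hM⟩ := hf
  refine ⟨hf.min measurable_const, M + |R|, fun x => ?_⟩
  simp only
  rcases min_choice (f x) R with h | h <;> rw [h]
  · linarith [hM x, abs_nonneg R]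
  · linarith [hM x, abs_nonneg (f x)]

lemma int (hf : KdvBM f) (ν : Measure X) [IsFiniteMeasure ν] : Integrable f ν := by
  obtain ⟨hf, M, hM⟩ := hf
  exact Integrable.of_bound hf.aestronglyMeasurable M (Eventually.of_forall hM)

end KdvBM

/-- Gronwall. -/
lemma kdv_gron {f f' : ℝ → ℝ} {a b k c : ℝ} (hab : a ≤ b) (hk : 0 ≤ k) (hc : 0 ≤ c)
    (hf : ContinuousOn f (Icc a b)) (hd : ∀ r ∈ Ioo a b, HasDerivAt f (f' r) r)
    (hle : ∀ r ∈ Ioo a b, f' r ≤ k * f r + c) :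
    f b ≤ (f a + c * (b - a)) * Real.exp (k * (b - a)) := by
  have hder : ∀ r ∈ Ioo a b, HasDerivAt (fun r => Real.exp (-(k * (r - a))) * f r - c * (r - a))
      (Real.exp (-(k * (r - a))) * (f' r - k * f r) - c) r := by
    intro r hr
    have h1 : HasDerivAt (fun r : ℝ => -(k * (r - a))) (-(k * 1)) r :=
      (((hasDerivAt_id r).sub_const a).const_mul k).neg
    have h2 : HasDerivAt (fun r : ℝ => c * (r - a)) (c * 1) r :=
      (((hasDerivAt_id r).sub_const a).const_mul c)
    have := (h1.exp.mul (hd r hr)).sub h2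
    refine this.congr_deriv ?_
    ring
  have hanti : AntitoneOn (fun r => Real.exp (-(k * (r - a))) * f r - c * (r - a)) (Icc a b) := by
    apply antitoneOn_of_deriv_nonpos (convex_Icc a b)
    · apply ContinuousOn.sub
      · exact ContinuousOn.mul (by fun_prop) hf
      · fun_prop
    · rw [interior_Icc]
      exact fun r hr => (hder r hr).differentiableAt.differentiableWithinAt
    · rw [interior_Icc]
      intro r hr
      rw [(hder r hr).deriv]
      have h1 : Real.exp (-(k * (r - a))) ≤ 1 := by
        rw [Real.exp_le_one_iff]
        have := mul_nonneg hk (sub_nonneg.2 hr.1.le)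
        linarith
      have h2 := hle r hr
      have h3 := Real.exp_pos (-(k * (r - a)))
      have h4 : Real.exp (-(k * (r - a))) * (f' r - k * f r) ≤ Real.exp (-(k * (r - a))) * c :=
        mul_le_mul_of_nonneg_left (by linarith) h3.le
      nlinarith
  have h := hanti (left_mem_Icc.2 hab) (right_mem_Icc.2 hab) hab
  simp only [sub_self, mul_zero, neg_zero, Real.exp_zero, one_mul, sub_zero] at h
  have h5 : Real.exp (-(k * (b - a))) * f b ≤ f a + c * (b - a) := by linarith
  have h6 := mul_le_mul_of_nonneg_right h5 (Real.exp_pos (k * (b - a))).le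
  have h7 : Real.exp (-(k * (b - a))) * Real.exp (k * (b - a)) = 1 := by
    rw [← Real.exp_add]; simp
  calc f b = (Real.exp (-(k * (b - a))) * Real.exp (k * (b - a))) * f b := by rw [h7, one_mul]
    _ = Real.exp (-(k * (b - a))) * f b * Real.exp (k * (b - a)) := by ring
    _ ≤ _ := h6

section abstr
set_option linter.unusedSectionVars false
variable {X : Type*} [MeasurableSpace X] (ν : Measure X) [IsFiniteMeasure ν]

/-- Weak differentiation from an `L²` Lipschitz bound and pointwise differentiability. -/
lemma kdv_weak {u : ℝ → X → ℝ} {q ψ : X → ℝ} {t K : ℝ} (hu : ∀ s, KdvBM (u s))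
    (hd : ∀ x, HasDerivAt (fun s => u s x) (q x) t) (hq : KdvBM q) (hψ : KdvBM ψ)
    (hK : ∀ᶠ s in 𝓝 t, ∫ x, (u s x - u t x) ^ 2 ∂ν ≤ K * (s - t) ^ 2) :
    HasDerivAt (fun s => ∫ x, u s x * ψ x ∂ν) (∫ x, q x * ψ x ∂ν) t := by
  rw [hasDerivAt_iff_tendsto_slope]
  obtain ⟨P, hP⟩ := hψ.2
  set v : ℝ → X → ℝ := fun s x => (s - t)⁻¹ * (u s x - u t x) - q x with hv
  have hvBM : ∀ s, KdvBM (v s) := fun s =>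
    ((KdvBM.const (s - t)⁻¹).mul ((hu s).sub (hu t))).sub hq
  have hvlim : ∀ x, Tendsto (fun s => v s x) (𝓝[≠] t) (𝓝 0) := by
    intro x
    have h := hasDerivAt_iff_tendsto_slope.1 (hd x)
    have h2 := h.sub_const (q x)
    rw [sub_self] at h2
    refine h2.congr fun s => ?_
    simp [hv, slope_def_field, div_eq_inv_mul]
  set K' : ℝ := 2 * |K| + 2 * ∫ x, q x ^ 2 ∂ν with hK'
  have hK'0 : 0 ≤ K' := by
    have : 0 ≤ ∫ x, q x ^ 2 ∂ν := integral_nonneg fun x => sq_nonneg _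
    positivity
  have hv2 : ∀ᶠ s in 𝓝[≠] t, ∫ x, v s x ^ 2 ∂ν ≤ K' := by
    filter_upwards [hK.filter_mono nhdsWithin_le_nhds, self_mem_nhdsWithin] with s hs hne
    have hne' : s - t ≠ 0 := sub_ne_zero.2 hne
    have hb : ∫ x, v s x ^ 2 ∂ν ≤
        ∫ x, (2 * ((s - t)⁻¹ ^ 2 * (u s x - u t x) ^ 2) + 2 * q x ^ 2) ∂ν := by
      apply integral_mono
      · exact ((hvBM s).sq).int ν
      · exact (((KdvBM.const 2).mul ((KdvBM.const ((s - t)⁻¹ ^ 2)).mul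
          ((hu s).sub (hu t)).sq)).add ((KdvBM.const 2).mul hq.sq)).int ν
      · intro x
        simp only [hv]
        nlinarith [sq_nonneg ((s - t)⁻¹ * (u s x - u t x) + q x)]
    have he : ∫ x, (2 * ((s - t)⁻¹ ^ 2 * (u s x - u t x) ^ 2) + 2 * q x ^ 2) ∂ν =
        2 * ((s - t)⁻¹ ^ 2 * ∫ x, (u s x - u t x) ^ 2 ∂ν) + 2 * ∫ x, q x ^ 2 ∂ν := by
      rw [integral_add, integral_const_mul, integral_const_mul, integral_const_mul]
      · exact ((KdvBM.const 2).mul ((KdvBM.const ((s - t)⁻¹ ^ 2)).mul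
          ((hu s).sub (hu t)).sq)).int ν
      · exact ((KdvBM.const 2).mul hq.sq).int ν
    have h3 : (s - t)⁻¹ ^ 2 * ∫ x, (u s x - u t x) ^ 2 ∂ν ≤ K := by
      calc _ ≤ (s - t)⁻¹ ^ 2 * (K * (s - t) ^ 2) :=
            mul_le_mul_of_nonneg_left hs (sq_nonneg _)
        _ = K := by field_simp
    have := le_abs_self K
    linarith
  have hL1 : Tendsto (fun s => ∫ x, |v s x| ∂ν) (𝓝[≠] t) (𝓝 0) := by
    rw [Metric.tendsto_nhds]
    intro ε hε
    set R : ℝ := 2 * (K' + 1) / ε with hR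
    have hR0 : 0 < R := by positivity
    have hmin : Tendsto (fun s => ∫ x, min |v s x| R ∂ν) (𝓝[≠] t) (𝓝 (∫ _x, (0:ℝ) ∂ν)) := by
      apply tendsto_integral_filter_of_dominated_convergence (fun _ => R)
      · exact Eventually.of_forall fun s => ((hvBM s).abs.min_const R).1.aestronglyMeasurable
      · refine Eventually.of_forall fun s => Eventually.of_forall fun x => ?_
        rw [Real.norm_eq_abs, abs_of_nonneg (le_min (abs_nonneg _) hR0.le)]
        exact min_le_right _ _
      · exact integrable_const _
      · refine Eventually.of_forall fun x => ?_
        have h := (hvlim x).abs.min (tendsto_const_nhds (x := R))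
        simpa [hR0.le] using h
    rw [integral_zero] at hmin
    have hmin2 := (Metric.tendsto_nhds.1 hmin) (ε / 2) (by positivity)
    filter_upwards [hmin2, hv2] with s h1 h2
    rw [Real.dist_eq, sub_zero] at h1 ⊢
    rw [abs_of_nonneg (integral_nonneg fun x => abs_nonneg _)]
    have h1' := (le_abs_self _).trans_lt h1
    have hle : ∫ x, |v s x| ∂ν ≤ ∫ x, (min |v s x| R + R⁻¹ * v s x ^ 2) ∂ν := by
      apply integral_mono
      · exact (hvBM s).abs.int ν
      · exact (((hvBM s).abs.min_const R).add ((KdvBM.const R⁻¹).mul (hvBM s).sq)).int ν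
      · intro x
        simp only
        rcases le_total |v s x| R with h | h
        · rw [min_eq_left h]
          have : 0 ≤ R⁻¹ * v s x ^ 2 := by positivity
          linarith
        · rw [min_eq_right h]
          have : |v s x| ≤ R⁻¹ * v s x ^ 2 := by
            rw [← sq_abs, inv_mul_eq_div, le_div_iff₀ hR0, pow_two]
            exact mul_le_mul_of_nonneg_left h (abs_nonneg _)
          linarith
    rw [integral_add (((hvBM s).abs.min_const R).int ν)
      (((KdvBM.const R⁻¹).mul (hvBM s).sq).int ν), integral_const_mul] at hle
    have h3 : R⁻¹ * ∫ x, v s x ^ 2 ∂ν ≤ R⁻¹ * K' :=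
      mul_le_mul_of_nonneg_left h2 (by positivity)
    have h4 : R⁻¹ * K' < ε / 2 := by
      rw [hR, inv_div, div_mul_eq_mul_div, div_lt_iff₀ (by positivity)]
      nlinarith
    linarith
  have hfin : Tendsto (fun s => ∫ x, v s x * ψ x ∂ν) (𝓝[≠] t) (𝓝 0) := by
    have hb : Tendsto (fun s => P * ∫ x, |v s x| ∂ν) (𝓝[≠] t) (𝓝 0) := by
      simpa using hL1.const_mul P
    refine squeeze_zero_norm (fun s => ?_) hb
    calc ‖∫ x, v s x * ψ x ∂ν‖ ≤ ∫ x, ‖v s x * ψ x‖ ∂ν := norm_integral_le_integral_norm _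
      _ ≤ ∫ x, P * |v s x| ∂ν := by
        apply integral_mono
        · exact ((hvBM s).mul hψ).abs.int ν
        · exact ((KdvBM.const P).mul (hvBM s).abs).int ν
        · intro x
          simp only [Real.norm_eq_abs, abs_mul]
          rw [mul_comm]
          exact mul_le_mul_of_nonneg_right (hP x) (abs_nonneg _)
      _ = _ := integral_const_mul _ _
  have h := hfin.add_const (∫ x, q x * ψ x ∂ν)
  rw [zero_add] at h
  refine h.congr fun s => ?_
  rw [slope_def_field, div_eq_inv_mul, ← integral_sub (((hu s).mul hψ).int ν)
    (((hu t).mul hψ).int ν), ← integral_const_mul, ← integral_add (((hvBM s).mul hψ).int ν)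
    ((hq.mul hψ).int ν)]
  congr 1
  ext x
  simp only [hv]
  ring

lemma kdv_energy_deriv {u : ℝ → X → ℝ} {q : X → ℝ} {t K : ℝ} (hu : ∀ s, KdvBM (u s))
    (hd : ∀ x, HasDerivAt (fun s => u s x) (q x) t) (hq : KdvBM q)
    (hK : ∀ᶠ s in 𝓝 t, ∫ x, (u s x - u t x) ^ 2 ∂ν ≤ K * (s - t) ^ 2) :
    HasDerivAt (fun s => ∫ x, u s x ^ 2 ∂ν) (2 * ∫ x, u t x * q x ∂ν) t := by
  have h1 := (kdv_weak ν hu hd hq (hu t) hK).const_mul 2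
  have h2 : HasDerivAt (fun s => ∫ x, (u s x - u t x) ^ 2 ∂ν) 0 t := by
    rw [hasDerivAt_iff_isLittleO]
    have hO : (fun s => ∫ x, (u s x - u t x) ^ 2 ∂ν) =O[𝓝 t] fun s => (s - t) ^ 2 := by
      refine Asymptotics.IsBigO.of_bound K ?_
      filter_upwards [hK] with s hs
      rw [Real.norm_eq_abs, Real.norm_eq_abs, abs_of_nonneg (integral_nonneg fun x => sq_nonneg _),
        abs_of_nonneg (sq_nonneg _)]
      exact hs
    have ho : (fun s : ℝ => (s - t) ^ 2) =o[𝓝 t] fun s => s - t := by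
      have : Tendsto (fun s : ℝ => s - t) (𝓝 t) (𝓝 0) := by
        have : Continuous (fun s : ℝ => s - t) := by fun_prop
        simpa using this.tendsto t
      exact (Asymptotics.isLittleO_pow_id one_lt_two).comp_tendsto this
    simpa using hO.trans_isLittleO ho
  have h3 := (h2.add h1).sub_const (∫ x, u t x ^ 2 ∂ν)
  have e : (fun s => ∫ x, u s x ^ 2 ∂ν) = fun s => ((fun s => ∫ x, (u s x - u t x) ^ 2 ∂ν) +
      fun s => 2 * ∫ x, u s x * u t x ∂ν) s - ∫ x, u t x ^ 2 ∂ν := by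
    ext s
    simp only [Pi.add_apply]
    rw [← integral_const_mul, ← integral_add (((hu s).sub (hu t)).sq.int ν)
      (((KdvBM.const 2).mul ((hu s).mul (hu t))).int ν), ← integral_sub
      ((((hu s).sub (hu t)).sq.add ((KdvBM.const 2).mul ((hu s).mul (hu t)))).int ν)
      ((hu t).sq.int ν)]
    congr 1
    ext x
    ring
  rw [e]
  refine h3.congr_deriv ?_
  rw [zero_add]
  congr 2
  ext x
  ring

/-- The abstract system. -/
structure KdvSys (Y g : ℝ → X → ℝ) (T C : ℝ) : Prop where
  hY : ∀ t, Measurable (Y t)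
  hYb : ∃ M, ∀ t x, |Y t x| ≤ M
  hgm : Measurable (fun p : X × ℝ => g p.2 p.1)
  hd : ∀ t ∈ Ioo 0 T, ∀ x, HasDerivAt (fun s => Y s x) (g t x) t
  hgc : ∀ x, ContinuousOn (fun t => g t x) (Ioo 0 T)
  hgb : ∀ t ∈ Ioo 0 T, ∃ n : ℝ, ∀ x, |g t x| ≤ n
  hC : 0 ≤ C
  hE : ∀ t ∈ Ioo 0 T, ∀ s ∈ Ioo 0 T,
    ∫ x, (Y t x - Y s x) * (g t x - g s x) ∂ν ≤ C * ∫ x, (Y t x - Y s x) ^ 2 ∂ν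

/-- Good times. -/
def KdvGood (Y : ℝ → X → ℝ) (t : ℝ) : Prop :=
  ∃ ε > 0, ∃ K, ∀ s r, |s - t| < ε → |r - t| < ε →
    ∫ x, (Y s x - Y r x) ^ 2 ∂ν ≤ K * (s - r) ^ 2

variable {ν} {Y g : ℝ → X → ℝ} {T C : ℝ}

lemma KdvSys.bmY (h : KdvSys ν Y g T C) (t : ℝ) : KdvBM (Y t) :=
  ⟨h.hY t, h.hYb.imp fun _ hM => hM t⟩

lemma KdvSys.bmg (h : KdvSys ν Y g T C) {t : ℝ} (ht : t ∈ Ioo 0 T) : KdvBM (g t) :=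
  ⟨h.hgm.comp (measurable_id.prodMk measurable_const), h.hgb t ht⟩

lemma KdvSys.contY (h : KdvSys ν Y g T C) (x : X) : ContinuousOn (fun t => Y t x) (Ioo 0 T) :=
  fun t ht => (h.hd t ht x).continuousAt.continuousWithinAt

lemma KdvSys.cont_sq (h : KdvSys ν Y g T C) {s : Set ℝ} {p q : ℝ → ℝ}
    (hp : ContinuousOn p s) (hq : ContinuousOn q s) (hps : ∀ r ∈ s, p r ∈ Ioo 0 T)
    (hqs : ∀ r ∈ s, q r ∈ Ioo 0 T) :
    ContinuousOn (fun r => ∫ x, (Y (p r) x - Y (q r) x) ^ 2 ∂ν) s := by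
  obtain ⟨M, hM⟩ := h.hYb
  apply continuousOn_of_dominated (bound := fun _ => (M + M) ^ 2)
  · exact fun r _ => (((h.bmY (p r)).sub (h.bmY (q r))).sq).1.aestronglyMeasurable
  · intro r _
    refine Eventually.of_forall fun x => ?_
    rw [Real.norm_eq_abs, abs_pow]
    exact pow_le_pow_left₀ (abs_nonneg _) ((abs_sub _ _).trans (add_le_add (hM _ _) (hM _ _))) 2
  · exact integrable_const _
  · refine Eventually.of_forall fun x => ?_
    exact (((h.contY x).comp hp hps).sub ((h.contY x).comp hq hqs)).pow 2

lemma KdvGood.ev {t : ℝ} (h : KdvGood ν Y t) :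
    ∃ K, ∀ᶠ s in 𝓝 t, ∫ x, (Y s x - Y t x) ^ 2 ∂ν ≤ K * (s - t) ^ 2 := by
  obtain ⟨ε, hε, K, hK⟩ := h
  refine ⟨K, ?_⟩
  filter_upwards [Metric.ball_mem_nhds t hε] with s hs
  exact hK s t (by simpa [Real.dist_eq] using hs) (by simpa using hε)

/-- Energy estimate on a gap of good times. -/
lemma KdvSys.gap (h : KdvSys ν Y g T C) {a b n : ℝ} (ha : a ∈ Ioo 0 T) (hb : b ∈ Ioo 0 T)
    (hgood : ∀ r ∈ Ioc a b, KdvGood ν Y r) (hn : ∀ x, |g a x| ≤ n) {r r' : ℝ}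
    (har : a ≤ r) (hrr : r < r') (hrb : r' ≤ b) :
    ∫ x, (Y r' x - Y r x) ^ 2 ∂ν ≤
      (n ^ 2 * ν.real univ * Real.exp (1 + 2 * C * T)) * (r' - r) ^ 2 := by
  have hC := h.hC
  set η := r' - r with hη
  have hη0 : 0 < η := sub_pos.2 hrr
  set m := ν.real univ with hm
  have hm0 : 0 ≤ m := measureReal_nonneg
  have hmem : ∀ s, a ≤ s → s ≤ b → s ∈ Ioo 0 T := fun s h1 h2 =>
    ⟨ha.1.trans_le h1, h2.trans_lt hb.2⟩
  -- first step
  have step1 : ∫ x, (Y (a + η) x - Y a x) ^ 2 ∂ν ≤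
      (0 + η * (n ^ 2 * m) * η) * Real.exp ((2 * C + η⁻¹) * η) := by
    have key := kdv_gron (f := fun s => ∫ x, (Y s x - Y a x) ^ 2 ∂ν)
      (f' := fun s => 2 * ∫ x, (Y s x - Y a x) * g s x ∂ν) (a := a) (b := a + η)
      (k := 2 * C + η⁻¹) (c := η * (n ^ 2 * m)) (by linarith) (by positivity) (by positivity)
      (h.cont_sq (p := fun s => s) (q := fun _ => a) (by fun_prop) (by fun_prop)
        (fun s hs => hmem s hs.1 (by linarith [hs.2])) (fun s hs => ha)) ?_ ?_
    · simpa using key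
    · intro s hs
      have hs' := hmem s hs.1.le (by linarith [hs.2])
      obtain ⟨K, hK⟩ := (hgood s ⟨hs.1, by linarith [hs.2]⟩).ev
      refine kdv_energy_deriv ν (u := fun s x => Y s x - Y a x) (K := K)
        (fun s => (h.bmY s).sub (h.bmY a)) (fun x => (h.hd s hs' x).sub_const _) (h.bmg hs') ?_
      filter_upwards [hK] with τ hτ
      simpa using hτ
    · intro s hs
      have hs' := hmem s hs.1.le (by linarith [hs.2])
      have hE := h.hE s hs' a ha
      have bz := (h.bmY s).sub (h.bmY a)
      have e1 : ∫ x, (Y s x - Y a x) * g s x ∂ν =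
          ∫ x, (Y s x - Y a x) * (g s x - g a x) ∂ν + ∫ x, (Y s x - Y a x) * g a x ∂ν := by
        rw [← integral_add ((bz.mul ((h.bmg hs').sub (h.bmg ha))).int ν)
          ((bz.mul (h.bmg ha)).int ν)]
        congr 1
        ext x
        ring
      have e2 : 2 * ∫ x, (Y s x - Y a x) * g a x ∂ν ≤
          η⁻¹ * ∫ x, (Y s x - Y a x) ^ 2 ∂ν + η * (n ^ 2 * m) := by
        have hc : η * (n ^ 2 * m) = ∫ _x, η * n ^ 2 ∂ν := by
          rw [integral_const, smul_eq_mul]; ring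
        rw [hc, ← integral_const_mul, ← integral_const_mul,
          ← integral_add (((KdvBM.const η⁻¹).mul bz.sq).int ν) (integrable_const _)]
        apply integral_mono (((KdvBM.const 2).mul (bz.mul (h.bmg ha))).int ν)
          ((((KdvBM.const η⁻¹).mul bz.sq).add (KdvBM.const _)).int ν)
        intro x
        have h1 : g a x ^ 2 ≤ n ^ 2 := by
          rw [← sq_abs]; exact pow_le_pow_left₀ (abs_nonneg _) (hn x) 2
        have h2 : 0 ≤ η⁻¹ * ((Y s x - Y a x) - η * g a x) ^ 2 := by positivity
        have h3 : η⁻¹ * ((Y s x - Y a x) - η * g a x) ^ 2 =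
            η⁻¹ * (Y s x - Y a x) ^ 2 - 2 * ((Y s x - Y a x) * g a x) + η * g a x ^ 2 := by
          field_simp
          ring
        simp only
        nlinarith
      rw [e1]
      linarith
  have step2 : ∫ x, (Y (r + η) x - Y r x) ^ 2 ∂ν ≤
      (∫ x, (Y (a + η) x - Y a x) ^ 2 ∂ν + 0 * (r - a)) * Real.exp (2 * C * (r - a)) := by
    refine kdv_gron (f := fun s => ∫ x, (Y (s + η) x - Y s x) ^ 2 ∂ν)
      (f' := fun s => 2 * ∫ x, (Y (s + η) x - Y s x) * (g (s + η) x - g s x) ∂ν)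
      har (by positivity) le_rfl
      (h.cont_sq (p := fun s => s + η) (q := fun s => s) (by fun_prop) (by fun_prop)
        (fun s hs => hmem _ (by linarith [hs.1]) (by linarith [hs.2]))
        (fun s hs => hmem _ hs.1 (by linarith [hs.2]))) ?_ ?_
    · intro s hs
      have hs1 := hmem s hs.1.le (by linarith [hs.2])
      have hs2 := hmem (s + η) (by linarith [hs.1]) (by linarith [hs.2])
      obtain ⟨K1, hK1⟩ := (hgood s ⟨hs.1, by linarith [hs.2]⟩).ev
      obtain ⟨K2, hK2⟩ := (hgood (s + η) ⟨by linarith [hs.1], by linarith [hs.2]⟩).ev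
      have hsh : Tendsto (fun τ : ℝ => τ + η) (𝓝 s) (𝓝 (s + η)) := by
        have : Continuous (fun τ : ℝ => τ + η) := by fun_prop
        exact this.tendsto s
      refine kdv_energy_deriv ν (u := fun s x => Y (s + η) x - Y s x) (K := 2 * K2 + 2 * K1)
        (fun s => (h.bmY (s + η)).sub (h.bmY s))
        (fun x => ((h.hd (s + η) hs2 x).comp_add_const s η).sub (h.hd s hs1 x))
        ((h.bmg hs2).sub (h.bmg hs1)) ?_
      filter_upwards [hK1, hsh.eventually hK2] with τ h1 h2
      have b1 := ((h.bmY (τ + η)).sub (h.bmY (s + η))).sq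
      have b2 := ((h.bmY τ).sub (h.bmY s)).sq
      have : ∫ x, (Y (τ + η) x - Y τ x - (Y (s + η) x - Y s x)) ^ 2 ∂ν ≤
          ∫ x, (2 * (Y (τ + η) x - Y (s + η) x) ^ 2 + 2 * (Y τ x - Y s x) ^ 2) ∂ν := by
        apply integral_mono
        · exact ((((h.bmY (τ + η)).sub (h.bmY τ)).sub ((h.bmY (s + η)).sub (h.bmY s))).sq).int ν
        · exact (((KdvBM.const 2).mul b1).add ((KdvBM.const 2).mul b2)).int ν
        · intro x
          simp only
          nlinarith [sq_nonneg ((Y (τ + η) x - Y (s + η) x) + (Y τ x - Y s x))]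
      rw [integral_add (((KdvBM.const 2).mul b1).int ν) (((KdvBM.const 2).mul b2).int ν),
        integral_const_mul, integral_const_mul] at this
      have e : τ + η - (s + η) = τ - s := by ring
      rw [e] at h2
      linarith
    · intro s hs
      have hs1 := hmem s hs.1.le (by linarith [hs.2])
      have hs2 := hmem (s + η) (by linarith [hs.1]) (by linarith [hs.2])
      have := h.hE (s + η) hs2 s hs1
      linarith
  have er : r + η = r' := by rw [hη]; ring
  rw [er] at step2
  calc _ ≤ _ := step2
    _ ≤ ((0 + η * (n ^ 2 * m) * η) * Real.exp ((2 * C + η⁻¹) * η) + 0 * (r - a)) *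
        Real.exp (2 * C * (r - a)) := by gcongr
    _ = (η ^ 2 * n ^ 2 * m) * Real.exp (1 + 2 * C * (η + (r - a))) := by
      have : 1 + 2 * C * (η + (r - a)) = (2 * C + η⁻¹) * η + 2 * C * (r - a) := by
        field_simp
        ring
      rw [this, Real.exp_add]
      ring
    _ ≤ (η ^ 2 * n ^ 2 * m) * Real.exp (1 + 2 * C * T) := by
      have : η + (r - a) ≤ T := by linarith [ha.1, hb.2]
      gcongr
    _ = _ := by ring

/-- Fatou. -/
lemma KdvSys.fatou (h : KdvSys ν Y g T C) {a t K : ℝ} (ht : t ∈ Ioo 0 T) (hat : a < t)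
    (hK : ∀ r ∈ Ico a t, ∫ x, (Y t x - Y r x) ^ 2 ∂ν ≤ K * (t - r) ^ 2) :
    ∫ x, g t x ^ 2 ∂ν ≤ K := by
  obtain ⟨n, hn⟩ := h.hgb t ht
  have hlim : Tendsto (fun s => ∫ x, min (((s - t)⁻¹ * (Y s x - Y t x)) ^ 2) (n ^ 2) ∂ν) (𝓝[<] t)
      (𝓝 (∫ x, g t x ^ 2 ∂ν)) := by
    apply tendsto_integral_filter_of_dominated_convergence (fun _ => n ^ 2)
    · exact Eventually.of_forall fun s => ((((KdvBM.const (s - t)⁻¹).mul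
        ((h.bmY s).sub (h.bmY t))).sq).min_const _).1.aestronglyMeasurable
    · refine Eventually.of_forall fun s => Eventually.of_forall fun x => ?_
      rw [Real.norm_eq_abs, abs_of_nonneg (le_min (sq_nonneg _) (sq_nonneg _))]
      exact min_le_right _ _
    · exact integrable_const _
    · refine Eventually.of_forall fun x => ?_
      have h1 := (hasDerivAt_iff_tendsto_slope.1 (h.hd t ht x)).mono_left
        (nhdsWithin_mono t (fun s hs => ne_of_lt hs : Iio t ⊆ {t}ᶜ))
      have h2 := (h1.pow 2).min (tendsto_const_nhds (x := n ^ 2))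
      have h3 : g t x ^ 2 ≤ n ^ 2 := by
        rw [← sq_abs]; exact pow_le_pow_left₀ (abs_nonneg _) (hn x) 2
      rw [min_eq_left h3] at h2
      refine h2.congr fun s => ?_
      simp [slope_def_field, div_eq_inv_mul]
  refine le_of_tendsto hlim ?_
  filter_upwards [Ico_mem_nhdsLT hat] with s hs
  have b := ((KdvBM.const (s - t)⁻¹).mul ((h.bmY s).sub (h.bmY t))).sq
  have hne : s - t ≠ 0 := by have := hs.2; intro h0; linarith
  calc ∫ x, min (((s - t)⁻¹ * (Y s x - Y t x)) ^ 2) (n ^ 2) ∂ν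
      ≤ ∫ x, ((s - t)⁻¹) ^ 2 * (Y t x - Y s x) ^ 2 ∂ν := by
        apply integral_mono ((b.min_const _).int ν)
          (((KdvBM.const (((s - t)⁻¹) ^ 2)).mul ((h.bmY t).sub (h.bmY s)).sq).int ν)
        intro x
        refine (min_le_left _ _).trans (le_of_eq ?_)
        ring
    _ = ((s - t)⁻¹) ^ 2 * ∫ x, (Y t x - Y s x) ^ 2 ∂ν := integral_const_mul _ _
    _ ≤ ((s - t)⁻¹) ^ 2 * (K * (t - s) ^ 2) :=
        mul_le_mul_of_nonneg_left (hK s hs) (sq_nonneg _)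
    _ = K := by
        have : (t - s) ^ 2 = (s - t) ^ 2 := by ring
        rw [this]
        field_simp

lemma kdv_cs {f : ℝ → ℝ} {r s : ℝ} (hrs : r < s) (hf : ContinuousOn f (Icc r s)) :
    (∫ τ in r..s, f τ) ^ 2 ≤ (s - r) * ∫ τ in r..s, f τ ^ 2 := by
  have hf' : ContinuousOn f (uIcc r s) := by rwa [uIcc_of_le hrs.le]
  set A := ∫ τ in r..s, f τ with hA
  have h0 : 0 ≤ ∫ τ in r..s, ((s - r) * f τ - A) ^ 2 :=
    intervalIntegral.integral_nonneg hrs.le fun _ _ => sq_nonneg _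
  have e : ∫ τ in r..s, ((s - r) * f τ - A) ^ 2 =
      (s - r) ^ 2 * (∫ τ in r..s, f τ ^ 2) - 2 * (s - r) * A * A + A ^ 2 * (s - r) := by
    have e1 : ∀ τ, ((s - r) * f τ - A) ^ 2 =
        (s - r) ^ 2 * f τ ^ 2 - (2 * (s - r) * A) * f τ + A ^ 2 := fun τ => by ring
    simp_rw [e1]
    have i1 : IntervalIntegrable (fun τ => (s - r) ^ 2 * f τ ^ 2) volume r s :=
      ContinuousOn.intervalIntegrable (by fun_prop)
    have i2 : IntervalIntegrable (fun τ => (2 * (s - r) * A) * f τ) volume r s :=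
      ContinuousOn.intervalIntegrable (by fun_prop)
    rw [intervalIntegral.integral_add (i1.sub i2) (by simp), intervalIntegral.integral_sub i1 i2,
      intervalIntegral.integral_const_mul, intervalIntegral.integral_const_mul,
      intervalIntegral.integral_const, smul_eq_mul, ← hA]
    ring
  rw [e] at h0
  have hp : 0 < s - r := sub_pos.2 hrs
  have : 0 ≤ (s - r) * ((s - r) * (∫ τ in r..s, f τ ^ 2) - A ^ 2) := by nlinarith
  have := (mul_nonneg_iff_of_pos_left hp).1 this
  linarith

lemma KdvSys.tonelli (h : KdvSys ν Y g T C) {r s K : ℝ} (hr : r ∈ Ioo 0 T) (hs : s ∈ Ioo 0 T)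
    (hrs : r < s) (hK : ∀ t ∈ Icc r s, ∫ x, g t x ^ 2 ∂ν ≤ K) :
    ∫ x, (Y s x - Y r x) ^ 2 ∂ν ≤ K * (s - r) ^ 2 := by
  have hsub : Icc r s ⊆ Ioo 0 T := fun t ht => ⟨hr.1.trans_le ht.1, ht.2.trans_lt hs.2⟩
  have hp : 0 ≤ s - r := by linarith
  have hK0 : 0 ≤ K := (integral_nonneg fun x => sq_nonneg _).trans (hK r ⟨le_rfl, hrs.le⟩)
  have hpt : ∀ x, ENNReal.ofReal ((Y s x - Y r x) ^ 2) ≤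
      ENNReal.ofReal (s - r) * ∫⁻ τ in Ioc r s, ENNReal.ofReal (g τ x ^ 2) := by
    intro x
    have hc : ContinuousOn (fun τ => g τ x) (Icc r s) := (h.hgc x).mono hsub
    have hc2 : ContinuousOn (fun τ => g τ x ^ 2) (Icc r s) := hc.pow 2
    have ftc : ∫ τ in r..s, g τ x = Y s x - Y r x := by
      apply intervalIntegral.integral_eq_sub_of_hasDerivAt (f := fun t => Y t x)
      · intro τ hτ
        rw [uIcc_of_le hrs.le] at hτ
        exact h.hd τ (hsub hτ) x
      · apply ContinuousOn.intervalIntegrable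
        rwa [uIcc_of_le hrs.le]
    have cs := kdv_cs hrs hc
    rw [ftc] at cs
    refine (ENNReal.ofReal_le_ofReal cs).trans ?_
    rw [ENNReal.ofReal_mul hp, intervalIntegral.integral_of_le hrs.le,
      ofReal_integral_eq_lintegral_ofReal]
    · exact (hc2.integrableOn_Icc).mono_set Ioc_subset_Icc_self
    · exact Eventually.of_forall fun τ => sq_nonneg _
  have hmeas : Measurable (fun p : X × ℝ => ENNReal.ofReal (g p.2 p.1 ^ 2)) :=
    (h.hgm.pow_const 2).ennreal_ofReal
  have hint : ENNReal.ofReal (∫ x, (Y s x - Y r x) ^ 2 ∂ν) ≤ ENNReal.ofReal (K * (s - r) ^ 2) := by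
    rw [ofReal_integral_eq_lintegral_ofReal (((h.bmY s).sub (h.bmY r)).sq.int ν)
      (Eventually.of_forall fun x => sq_nonneg _)]
    calc _ ≤ ∫⁻ x, ENNReal.ofReal (s - r) * (∫⁻ τ in Ioc r s, ENNReal.ofReal (g τ x ^ 2)) ∂ν :=
          lintegral_mono hpt
      _ = ENNReal.ofReal (s - r) * ∫⁻ x, (∫⁻ τ in Ioc r s, ENNReal.ofReal (g τ x ^ 2)) ∂ν := by
          rw [lintegral_const_mul' _ _ ENNReal.ofReal_ne_top]
      _ = ENNReal.ofReal (s - r) * ∫⁻ τ in Ioc r s, ∫⁻ x, ENNReal.ofReal (g τ x ^ 2) ∂ν := by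
          rw [lintegral_lintegral_swap]
          exact hmeas.aemeasurable
      _ ≤ ENNReal.ofReal (s - r) * ∫⁻ τ in Ioc r s, ENNReal.ofReal K := by
          gcongr 1
          apply setLIntegral_mono measurable_const
          intro τ hτ
          have hτ' := hsub (Ioc_subset_Icc_self hτ)
          rw [← ofReal_integral_eq_lintegral_ofReal ((h.bmg hτ').sq.int ν)
            (Eventually.of_forall fun x => sq_nonneg _)]
          exact ENNReal.ofReal_le_ofReal (hK τ (Ioc_subset_Icc_self hτ))
      _ = ENNReal.ofReal (K * (s - r) ^ 2) := by
          rw [setLIntegral_const, Real.volume_Ioc, ← ENNReal.ofReal_mul hK0,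
            ← ENNReal.ofReal_mul hp]
          congr 1
          ring
  exact (ENNReal.ofReal_le_ofReal_iff (by positivity)).1 hint

/-- Every time is good. -/
lemma KdvSys.good (h : KdvSys ν Y g T C) : ∀ t ∈ Ioo 0 T, KdvGood ν Y t := by
  by_contra hcon
  push Not at hcon
  obtain ⟨t₁, ht₁, hbad₁⟩ := hcon
  have hopen : IsOpen {t | KdvGood ν Y t} := by
    rw [Metric.isOpen_iff]
    rintro t ⟨ε, hε, K, hK⟩
    refine ⟨ε / 2, by positivity, fun t' ht' => ⟨ε / 2, by positivity, K, fun s r hs hr => ?_⟩⟩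
    rw [Metric.mem_ball, Real.dist_eq] at ht'
    refine hK s r ?_ ?_
    · have := abs_sub_le s t' t; linarith
    · have := abs_sub_le r t' t; linarith
  set E : Set ℝ := Ioo 0 T ∩ {t | KdvGood ν Y t}ᶜ with hEdef
  have hlc : IsLocallyClosed E := isOpen_Ioo.isLocallyClosed.inter hopen.isClosed_compl.isLocallyClosed
  have : LocallyCompactSpace E := hlc.locallyCompactSpace
  have : Nonempty E := ⟨⟨t₁, ht₁, hbad₁⟩⟩
  set F : ℕ → Set E := fun n => {t | ∀ x, |g t x| ≤ n} with hF
  have hFc : ∀ n, IsClosed (F n) := by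
    intro n
    have : F n = ⋂ x, {t : E | |g t x| ≤ n} := by ext; simp [hF]
    rw [this]
    refine isClosed_iInter fun x => ?_
    have hc : Continuous (fun t : E => g t x) :=
      (h.hgc x).comp_continuous continuous_subtype_val fun t => t.2.1
    exact isClosed_le hc.abs continuous_const
  have hFU : ⋃ n, F n = univ := by
    ext t
    simp only [mem_iUnion, mem_univ, iff_true]
    obtain ⟨n, hn⟩ := h.hgb t t.2.1
    obtain ⟨N, hN⟩ := exists_nat_ge n
    exact ⟨N, fun x => (hn x).trans hN⟩
  obtain ⟨n, ⟨t₀, ht₀⟩⟩ := nonempty_interior_of_iUnion_of_closed hFc hFU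
  rw [mem_interior_iff_mem_nhds, Metric.mem_nhds_iff] at ht₀
  obtain ⟨δ, hδ, hball⟩ := ht₀
  have hEn : ∀ t ∈ E, |t - t₀| < δ → ∀ x, |g t x| ≤ n := by
    intro t ht htd
    have : (⟨t, ht⟩ : E) ∈ F n := hball (by
      rw [Metric.mem_ball, Subtype.dist_eq, Real.dist_eq]; exact htd)
    exact this
  have ht0 := t₀.2.1
  -- a small neighbourhood
  obtain ⟨ε, hε, hεsub⟩ := Metric.isOpen_iff.1 isOpen_Ioo (t₀ : ℝ) ht0
  set ρ := min δ ε / 2 with hρ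
  have hρ0 : 0 < ρ := by positivity
  have hρδ : ρ < δ := by have := min_le_left δ ε; rw [hρ]; linarith
  have hρε : ρ < ε := by have := min_le_right δ ε; rw [hρ]; linarith
  have hI : ∀ s, |s - (t₀ : ℝ)| ≤ ρ → s ∈ Ioo 0 T := fun s hs => hεsub (by
    rw [Metric.mem_ball, Real.dist_eq]; linarith)
  set s₀ : ℝ := t₀ - ρ with hs₀
  have hs₀I : s₀ ∈ Ioo 0 T := hI _ (by rw [hs₀]; simp [abs_of_pos hρ0])
  obtain ⟨n₀, hn₀⟩ := h.hgb s₀ hs₀I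
  set N : ℝ := max n n₀ with hN
  have hN0 : 0 ≤ N := (Nat.cast_nonneg n).trans (le_max_left _ _)
  have hC := h.hC
  have hm0 : 0 ≤ ν.real univ := measureReal_nonneg
  set K : ℝ := N ^ 2 * ν.real univ * Real.exp (1 + 2 * C * T) with hKdef
  have hsqN : ∀ t ∈ Ioo 0 T, (∀ x, |g t x| ≤ N) → ∫ x, g t x ^ 2 ∂ν ≤ K := by
    intro t ht htN
    calc ∫ x, g t x ^ 2 ∂ν ≤ ∫ _x, N ^ 2 ∂ν := by
          apply integral_mono ((h.bmg ht).sq.int ν) (integrable_const _)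
          intro x
          simp only
          rw [← sq_abs]
          exact pow_le_pow_left₀ (abs_nonneg _) (htN x) 2
      _ = N ^ 2 * ν.real univ * 1 := by rw [integral_const, smul_eq_mul]; ring
      _ ≤ K := by
          rw [hKdef]
          have hT : 0 ≤ T := (ht.1.trans ht.2).le
          have : 1 ≤ Real.exp (1 + 2 * C * T) := Real.one_le_exp (by positivity)
          gcongr
  have hall : ∀ t, s₀ ≤ t → t ≤ t₀ + ρ → ∫ x, g t x ^ 2 ∂ν ≤ K := by
    intro t h1 h2
    have htI : t ∈ Ioo 0 T := hI t (by rw [abs_le]; constructor <;> linarith)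
    set A : Set ℝ := Icc s₀ t ∩ ({s₀} ∪ {t | KdvGood ν Y t}ᶜ) with hA
    have hAc : IsCompact A := isCompact_Icc.inter_right
      (isClosed_singleton.union hopen.isClosed_compl)
    have hAne : A.Nonempty := ⟨s₀, ⟨le_rfl, h1⟩, Or.inl rfl⟩
    obtain ⟨a, haA, hamax⟩ := hAc.exists_isGreatest hAne
    have haI : a ∈ Ioo 0 T := ⟨hs₀I.1.trans_le haA.1.1, haA.1.2.trans_lt htI.2⟩
    have haN : ∀ x, |g a x| ≤ N := by
      intro x
      rcases haA.2 with h3 | h3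
      · rw [mem_singleton_iff] at h3
        rw [h3]
        exact (hn₀ x).trans (le_max_right _ _)
      · refine (hEn a ⟨haI, h3⟩ ?_ x).trans (le_max_left _ _)
        rw [abs_lt]
        constructor <;> linarith [haA.1.1, haA.1.2]
    rcases haA.1.2.eq_or_lt with h3 | h3
    · rw [← h3]
      exact hsqN a haI haN
    · have hgood : ∀ r ∈ Ioc a t, KdvGood ν Y r := by
        intro r hr
        by_contra hb
        have := hamax ⟨⟨haA.1.1.trans hr.1.le, hr.2⟩, Or.inr hb⟩
        linarith [hr.1]
      exact h.fatou htI h3 fun r hr => h.gap haI htI hgood haN hr.1 hr.2 le_rfl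
  apply t₀.2.2
  refine ⟨ρ, hρ0, K, ?_⟩
  have hlt : ∀ s r, |s - (t₀ : ℝ)| < ρ → |r - (t₀ : ℝ)| < ρ → r < s →
      ∫ x, (Y s x - Y r x) ^ 2 ∂ν ≤ K * (s - r) ^ 2 := by
    intro s r hs hr hrs
    refine h.tonelli (hI r hr.le) (hI s hs.le) hrs fun t ht => hall t ?_ ?_
    · linarith [(abs_lt.1 hr).1, ht.1]
    · linarith [(abs_lt.1 hs).2, ht.2]
  intro s r hs hr
  rcases lt_trichotomy r s with h1 | h1 | h1
  · exact hlt s r hs hr h1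
  · simp [h1]
  · have := hlt r s hr hs h1
    have e1 : ∀ x, (Y s x - Y r x) ^ 2 = (Y r x - Y s x) ^ 2 := fun x => by ring
    have e2 : (s - r) ^ 2 = (r - s) ^ 2 := by ring
    simp_rw [e1, e2]
    exact this

lemma KdvSys.main (h : KdvSys ν Y g T C) {t : ℝ} (ht : t ∈ Ioo 0 T) {ψ : X → ℝ} (hψ : KdvBM ψ) :
    HasDerivAt (fun s => ∫ x, Y s x * ψ x ∂ν) (∫ x, g t x * ψ x ∂ν) t := by
  obtain ⟨K, hK⟩ := (h.good t ht).ev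
  exact kdv_weak ν h.bmY (h.hd t ht) (h.bmg ht) hψ hK

end abstr

/-- Spatial profile: a `C³` function on `[0,L]` with its derivatives. -/
structure KdvProf (L : ℝ) (f f1 f2 f3 : ℝ → ℝ) : Prop where
  c0 : ContinuousOn f (Icc 0 L)
  c1 : ContinuousOn f1 (Icc 0 L)
  c2 : ContinuousOn f2 (Icc 0 L)
  c3 : ContinuousOn f3 (Icc 0 L)
  d0 : ∀ x ∈ Ioo 0 L, HasDerivAt f (f1 x) x
  d1 : ∀ x ∈ Ioo 0 L, HasDerivAt f1 (f2 x) x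
  d2 : ∀ x ∈ Ioo 0 L, HasDerivAt f2 (f3 x) x
  b0 : f 0 = 0
  bL : f L = 0
  bL1 : f1 L = 0

lemma kdv_prof {L : ℝ} (hL : 0 < L) {f : ℝ → ℝ} (hf : ContDiffOn ℝ 3 f (Icc 0 L)) (h0 : f 0 = 0)
    (h1 : f L = 0) (h2 : derivWithin f (Icc 0 L) L = 0) :
    KdvProf L f (derivWithin f (Icc 0 L)) (iteratedDerivWithin 2 f (Icc 0 L))
      (iteratedDerivWithin 3 f (Icc 0 L)) := by
  have hu : UniqueDiffOn ℝ (Icc 0 L) := uniqueDiffOn_Icc hL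
  have e1 : iteratedDerivWithin 1 f (Icc 0 L) = derivWithin f (Icc 0 L) := by
    rw [show (1 : ℕ) = 0 + 1 from rfl, iteratedDerivWithin_succ, iteratedDerivWithin_zero]
  have e2 : iteratedDerivWithin 2 f (Icc 0 L) = derivWithin (derivWithin f (Icc 0 L)) (Icc 0 L) := by
    rw [show (2 : ℕ) = 1 + 1 from rfl, iteratedDerivWithin_succ, e1]
  have e3 : iteratedDerivWithin 3 f (Icc 0 L) =
      derivWithin (iteratedDerivWithin 2 f (Icc 0 L)) (Icc 0 L) := by
    rw [show (3 : ℕ) = 2 + 1 from rfl, iteratedDerivWithin_succ]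
  have hder : ∀ k : ℝ → ℝ, DifferentiableOn ℝ k (Icc 0 L) → ∀ x ∈ Ioo 0 L,
      HasDerivAt k (derivWithin k (Icc 0 L) x) x := fun k hk x hx =>
    ((hk x (Ioo_subset_Icc_self hx)).hasDerivWithinAt).hasDerivAt (Icc_mem_nhds hx.1 hx.2)
  refine ⟨hf.continuousOn, ?_, ?_, ?_, ?_, ?_, ?_, h0, h1, h2⟩
  · rw [← e1]; exact hf.continuousOn_iteratedDerivWithin (by norm_num) hu
  · exact hf.continuousOn_iteratedDerivWithin (by norm_num) hu
  · exact hf.continuousOn_iteratedDerivWithin (by norm_num) hu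
  · exact hder f (hf.differentiableOn (by norm_num))
  · rw [e2, ← e1]
    exact hder _ (hf.differentiableOn_iteratedDerivWithin (by norm_num) hu)
  · rw [e3]
    exact hder _ (hf.differentiableOn_iteratedDerivWithin (by norm_num) hu)

set_option maxHeartbeats 1000000 in
lemma kdv_energy {L M : ℝ} (hL : 0 < L) {f f1 f2 f3 k k1 k2 k3 : ℝ → ℝ}
    (hf : KdvProf L f f1 f2 f3) (hk : KdvProf L k k1 k2 k3)
    (hfM : ∀ x ∈ Icc 0 L, |f x| ≤ M) (hkM : ∀ x ∈ Icc 0 L, |k x| ≤ M) :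
    ∫ x in (0:ℝ)..L, (1 + x) * ((f x - k x) *
      (-(f1 x + f x * f1 x + f3 x) - -(k1 x + k x * k1 x + k3 x))) ≤
    (1 / 2 + M + (1 + L) ^ 2 * M ^ 2 / 6) * ∫ x in (0:ℝ)..L, (1 + x) * (f x - k x) ^ 2 := by
  obtain ⟨cf0, cf1, cf2, cf3, df0, df1, df2, bf0, bfL, bfL1⟩ := hf
  obtain ⟨ck0, ck1, ck2, ck3, dk0, dk1, dk2, bk0, bkL, bkL1⟩ := hk
  have hM0 : 0 ≤ M := (abs_nonneg _).trans (hfM 0 ⟨le_rfl, hL.le⟩)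
  set B : ℝ → ℝ := fun x => (1 + x) * (f x - k x) * (f2 x - k2 x) - (f x - k x) * (f1 x - k1 x)
    - (1 / 2) * (1 + x) * (f1 x - k1 x) ^ 2 + (1 / 2) * (1 + x) * (f x - k x) ^ 2
    + (1 / 2) * (1 + x) * (f x - k x) * (f x ^ 2 - k x ^ 2) with hB
  set R : ℝ → ℝ := fun x => -(3 / 2) * (f1 x - k1 x) ^ 2 + (1 / 2) * (f x - k x) ^ 2
    + (1 / 2) * (f x ^ 2 - k x ^ 2) * ((f x - k x) + (1 + x) * (f1 x - k1 x)) with hR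
  set B' : ℝ → ℝ := fun x => R x - (1 + x) * ((f x - k x) *
      (-(f1 x + f x * f1 x + f3 x) - -(k1 x + k x * k1 x + k3 x))) with hB'
  have hu : uIcc 0 L = Icc 0 L := uIcc_of_le hL.le
  have cB : ContinuousOn B (Icc 0 L) := by fun_prop
  have cR : ContinuousOn R (Icc 0 L) := by fun_prop
  have cE : ContinuousOn (fun x => (1 + x) * ((f x - k x) *
      (-(f1 x + f x * f1 x + f3 x) - -(k1 x + k x * k1 x + k3 x)))) (Icc 0 L) := by fun_prop
  have cZ : ContinuousOn (fun x => (1 + x) * (f x - k x) ^ 2) (Icc 0 L) := by fun_prop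
  have iR : IntervalIntegrable R volume 0 L := ContinuousOn.intervalIntegrable (by rwa [hu])
  have iE := ContinuousOn.intervalIntegrable (μ := volume) (by rw [hu]; exact cE)
  have iZ := ContinuousOn.intervalIntegrable (μ := volume) (by rw [hu]; exact cZ)
  have hd : ∀ x ∈ Ioo 0 L, HasDerivAt B (B' x) x := by
    intro x hx
    have z0 := (df0 x hx).sub (dk0 x hx)
    have z1 := (df1 x hx).sub (dk1 x hx)
    have z2 := (df2 x hx).sub (dk2 x hx)
    have w : HasDerivAt (fun x : ℝ => 1 + x) 1 x := (hasDerivAt_id x).const_add 1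
    have wh : HasDerivAt (fun x : ℝ => (1 / 2) * (1 + x)) ((1 / 2) * 1) x := w.const_mul _
    have q := ((df0 x hx).pow 2).sub ((dk0 x hx).pow 2)
    have h := (((((w.mul z0).mul z2).sub (z0.mul z1)).sub (wh.mul (z1.pow 2))).add
      (wh.mul (z0.pow 2))).add ((wh.mul z0).mul q)
    refine h.congr_deriv ?_
    simp only [hB', hR, Pi.sub_apply, Pi.mul_apply, Pi.pow_apply]
    push_cast
    ring
  have ftc := intervalIntegral.integral_eq_sub_of_hasDerivAt_of_le hL.le cB hd (iR.sub iE)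
  have eB : B L - B 0 = (1 / 2) * (f1 0 - k1 0) ^ 2 := by
    simp only [hB, bf0, bk0, bfL, bkL, bfL1, bkL1]
    ring
  rw [eB, hB', intervalIntegral.integral_sub iR iE] at ftc
  have hle : ∫ x in (0:ℝ)..L, R x ≤
      ∫ x in (0:ℝ)..L, (1 / 2 + M + (1 + L) ^ 2 * M ^ 2 / 6) * ((1 + x) * (f x - k x) ^ 2) := by
    apply intervalIntegral.integral_mono_on hL.le iR (iZ.const_mul _)
    intro x hx
    have hA : |(f x + k x) / 2| ≤ M := by
      have h1 := abs_le.1 (hfM x hx)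
      have h2 := abs_le.1 (hkM x hx)
      rw [abs_le]
      constructor <;> linarith
    set A := (f x + k x) / 2 with hAdef
    set z := f x - k x with hz
    set z' := f1 x - k1 x with hz'
    have eR : R x = -(3 / 2) * z' ^ 2 + (1 / 2) * z ^ 2 + A * z * (z + (1 + x) * z') := by
      simp only [hR, hAdef, hz, hz']
      ring
    rw [eR]
    have hA2 : A ^ 2 ≤ M ^ 2 := by rw [← sq_abs]; exact pow_le_pow_left₀ (abs_nonneg _) hA 2
    have hx1 : (1 + x) ^ 2 ≤ (1 + L) ^ 2 :=
      pow_le_pow_left₀ (by linarith [hx.1]) (by linarith [hx.2]) 2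
    have s1 : A * z ^ 2 ≤ M * z ^ 2 :=
      mul_le_mul_of_nonneg_right ((le_abs_self _).trans hA) (sq_nonneg _)
    have s2 : A * z * ((1 + x) * z') ≤ (3 / 2) * z' ^ 2 + ((1 + x) ^ 2 * A ^ 2 / 6) * z ^ 2 := by
      have e : (3 / 2) * z' ^ 2 + ((1 + x) ^ 2 * A ^ 2 / 6) * z ^ 2 - A * z * ((1 + x) * z') =
          (1 / 6) * (3 * z' - (1 + x) * A * z) ^ 2 := by ring
      have e0 : 0 ≤ (1 / 6) * (3 * z' - (1 + x) * A * z) ^ 2 := by positivity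
      linarith
    have s3 : (1 + x) ^ 2 * A ^ 2 / 6 * z ^ 2 ≤ (1 + L) ^ 2 * M ^ 2 / 6 * z ^ 2 := by gcongr
    have s4 : (1 / 2 + M + (1 + L) ^ 2 * M ^ 2 / 6) * z ^ 2 ≤
        (1 / 2 + M + (1 + L) ^ 2 * M ^ 2 / 6) * ((1 + x) * z ^ 2) := by
      have h0 : z ^ 2 ≤ (1 + x) * z ^ 2 := by nlinarith [mul_nonneg hx.1 (sq_nonneg z)]
      gcongr
    have s5 : A * z * (z + (1 + x) * z') = A * z ^ 2 + A * z * ((1 + x) * z') := by ring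
    rw [s5]
    linarith
  rw [intervalIntegral.integral_const_mul] at hle
  have := sq_nonneg (f1 0 - k1 0)
  linarith

lemma kdv_phi_deriv (x : ℝ) : HasDerivAt phiKdV (Real.sin x / Real.sqrt (3 * Real.pi)) x := by
  have h := ((Real.hasDerivAt_cos x).const_sub 1).div_const (Real.sqrt (3 * Real.pi))
  rw [neg_neg] at h
  exact h

lemma kdv_proj {f f1 f2 f3 : ℝ → ℝ} (hf : KdvProf (2 * Real.pi) f f1 f2 f3) :
    ∫ x in (0:ℝ)..(2 * Real.pi), -(f1 x + f x * f1 x + f3 x) * phiKdV x =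
      (1 / 2 : ℝ) * ∫ x in (0:ℝ)..(2 * Real.pi), f x ^ 2 * deriv phiKdV x := by
  obtain ⟨cf0, cf1, cf2, cf3, df0, df1, df2, bf0, bfL, bfL1⟩ := hf
  have hL : 0 < 2 * Real.pi := by positivity
  set c := Real.sqrt (3 * Real.pi) with hc
  have ed : deriv phiKdV = fun x => Real.sin x / c := funext fun x => (kdv_phi_deriv x).deriv
  have cphi : Continuous phiKdV := by unfold phiKdV; fun_prop
  rw [ed]
  have hu : uIcc 0 (2 * Real.pi) = Icc 0 (2 * Real.pi) := uIcc_of_le hL.le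
  set B : ℝ → ℝ := fun x => f2 x * phiKdV x - f1 x * (Real.sin x / c) + f x * (Real.cos x / c)
    + f x * phiKdV x + (1 / 2) * (f x ^ 2 * phiKdV x) with hB
  have cB : ContinuousOn B (Icc 0 (2 * Real.pi)) := by
    have := cphi.continuousOn (s := Icc 0 (2 * Real.pi))
    fun_prop
  have c1 : ContinuousOn (fun x => (1 / 2 : ℝ) * (f x ^ 2 * (Real.sin x / c)))
      (Icc 0 (2 * Real.pi)) := by fun_prop
  have c2 : ContinuousOn (fun x => -(f1 x + f x * f1 x + f3 x) * phiKdV x)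
      (Icc 0 (2 * Real.pi)) := by
    have := cphi.continuousOn (s := Icc 0 (2 * Real.pi))
    fun_prop
  have i1 := ContinuousOn.intervalIntegrable (μ := volume) (by rw [hu]; exact c1)
  have i2 := ContinuousOn.intervalIntegrable (μ := volume) (by rw [hu]; exact c2)
  have hd : ∀ x ∈ Ioo 0 (2 * Real.pi), HasDerivAt B ((1 / 2 : ℝ) * (f x ^ 2 * (Real.sin x / c)) -
      -(f1 x + f x * f1 x + f3 x) * phiKdV x) x := by
    intro x hx
    have p0 := kdv_phi_deriv x
    have p1 := (Real.hasDerivAt_sin x).div_const c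
    have p2 := (Real.hasDerivAt_cos x).div_const c
    have h := (((((df2 x hx).mul p0).sub ((df1 x hx).mul p1)).add ((df0 x hx).mul p2)).add
      ((df0 x hx).mul p0)).add ((((df0 x hx).pow 2).mul p0).const_mul (1 / 2 : ℝ))
    refine h.congr_deriv ?_
    simp only [Pi.pow_apply]
    push_cast
    ring
  have ftc := intervalIntegral.integral_eq_sub_of_hasDerivAt_of_le hL.le cB hd (i1.sub i2)
  rw [intervalIntegral.integral_sub i1 i2, intervalIntegral.integral_const_mul] at ftc
  have eB : B (2 * Real.pi) - B 0 = 0 := by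
    simp [hB, phiKdV, bf0, bfL, bfL1]
  linarith

/-- for a classical solution `y` of the nonlinear KdV system at the
critical length `L = 2π`, the projection coordinate `p(t) = ∫₀^{2π} y(t,x) φ(x) dx`
is differentiable on `(0,T)` with `p′(t) = (1/2) ∫₀^{2π} y(t,x)² φ′(x) dx`. -/
theorem kdv_projection_derivative (T : ℝ) (hT : 0 < T)
    (y : ℝ → ℝ → ℝ) (hy : IsNonlinearKdVSol (2 * Real.pi) T y) :
    ∀ t ∈ Ioo (0:ℝ) T,
      HasDerivWithinAt (fun s => ∫ x in (0:ℝ)..(2 * Real.pi), y s x * phiKdV x)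
        ((1/2 : ℝ) * ∫ x in (0:ℝ)..(2 * Real.pi), (y t x) ^ 2 * deriv phiKdV x)
        (Icc (0:ℝ) T) t := by
  intro t ht
  obtain ⟨hx3, ht1, hcont, hpde, hbc⟩ := hy
  set L : ℝ := 2 * Real.pi with hLdef
  have hL : 0 < L := by positivity
  -- clamped version
  set Ycl : ℝ → ℝ → ℝ := fun x s => y (projIcc 0 T hT.le s) (projIcc 0 L hL.le x) with hYcl
  have hYc : Continuous (Function.uncurry Ycl) := by
    have : Continuous (fun p : ℝ × ℝ => (((projIcc 0 T hT.le p.2 : Icc 0 T) : ℝ),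
        ((projIcc 0 L hL.le p.1 : Icc 0 L) : ℝ))) := by
      have h1 := continuous_projIcc (h := hT.le)
      have h2 := continuous_projIcc (h := hL.le)
      fun_prop
    exact hcont.comp_continuous this fun p => ⟨Subtype.coe_prop _, Subtype.coe_prop _⟩
  have hYeq : ∀ s ∈ Icc 0 T, ∀ x ∈ Icc 0 L, Ycl x s = y s x := by
    intro s hs x hx
    simp [hYcl, projIcc_of_mem hT.le hs, projIcc_of_mem hL.le hx]
  obtain ⟨M, hM⟩ : ∃ M, ∀ s ∈ Icc 0 T, ∀ x ∈ Icc 0 L, |y s x| ≤ M := by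
    obtain ⟨M, hM⟩ := (isCompact_Icc.prod isCompact_Icc).exists_bound_of_continuousOn hcont
    exact ⟨M, fun s hs x hx => hM (s, x) ⟨hs, hx⟩⟩
  have hM0 : 0 ≤ M := (abs_nonneg _).trans (hM 0 ⟨le_rfl, hT.le⟩ 0 ⟨le_rfl, hL.le⟩)
  have hYM : ∀ x s, |Ycl x s| ≤ M := fun x s => hM _ (Subtype.coe_prop _) _ (Subtype.coe_prop _)
  have prof := fun s (hs : s ∈ Icc 0 T) => kdv_prof hL (hx3 s hs) (hbc s hs).1 (hbc s hs).2.1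
    (hbc s hs).2.2
  set G : ℝ → ℝ → ℝ := fun s x => -(derivWithin (y s) (Icc 0 L) x
    + y s x * derivWithin (y s) (Icc 0 L) x + iteratedDerivWithin 3 (y s) (Icc 0 L) x) with hG
  have hGc : ∀ s ∈ Icc 0 T, ContinuousOn (G s) (Icc 0 L) := by
    intro s hs
    obtain ⟨c0, c1, c2, c3, -⟩ := prof s hs
    simp only [hG]
    fun_prop
  have hdw : ∀ s ∈ Ioo 0 T, ∀ x ∈ Ioo 0 L, HasDerivAt (Ycl x) (G s x) s := by
    intro s hs x hx
    have h1 := (((ht1 x (Ioo_subset_Icc_self hx)).differentiableOn (by norm_num) s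
      (Ioo_subset_Icc_self hs)).hasDerivWithinAt).hasDerivAt (Icc_mem_nhds hs.1 hs.2)
    have h2 := hpde s hs x hx
    have h3 : derivWithin (fun s => y s x) (Icc 0 T) s = G s x := by
      simp only [hG]; linarith
    rw [h3] at h1
    refine h1.congr_of_eventuallyEq ?_
    filter_upwards [Icc_mem_nhds hs.1 hs.2] with r hr
    exact hYeq r hr x (Ioo_subset_Icc_self hx)
  set w : ℝ → ℝ := fun x => Real.sqrt (1 + |x|) with hw
  have hwc : Continuous w := by simp only [hw]; fun_prop
  have hw2 : ∀ x, w x * w x = 1 + |x| := fun x => Real.mul_self_sqrt (by positivity)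
  have hw1 : ∀ x, 1 ≤ w x := fun x => by
    simp only [hw]
    rw [Real.one_le_sqrt]
    linarith [abs_nonneg x]
  have hwL : ∀ x ∈ Icc 0 L, |w x| ≤ w L := by
    intro x hx
    rw [abs_of_nonneg (zero_le_one.trans (hw1 x))]
    apply Real.sqrt_le_sqrt
    rw [abs_of_nonneg hx.1, abs_of_nonneg hL.le]
    linarith [hx.2]
  set Y : ℝ → ℝ → ℝ := fun s => (Ioo 0 L).indicator (fun x => w x * Ycl x s) with hY
  set g : ℝ → ℝ → ℝ := fun s => (Ioo 0 L).indicator (fun x => w x * deriv (Ycl x) s) with hg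
  have hYin : ∀ s, ∀ x ∈ Ioo 0 L, Y s x = w x * Ycl x s := fun s x hx => indicator_of_mem hx _
  have hYout : ∀ s, ∀ x ∉ Ioo 0 L, Y s x = 0 := fun s x hx => indicator_of_notMem hx _
  have hgin : ∀ s ∈ Ioo 0 T, ∀ x ∈ Ioo 0 L, g s x = w x * G s x := fun s hs x hx => by
    rw [← (hdw s hs x hx).deriv]
    exact indicator_of_mem hx _
  have hgout : ∀ s, ∀ x ∉ Ioo 0 L, g s x = 0 := fun s x hx => indicator_of_notMem hx _
  set ν : Measure ℝ := volume.restrict (Ioo 0 L) with hν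
  have hint : ∀ F : ℝ → ℝ, ∫ x in (0:ℝ)..L, F x = ∫ x, F x ∂ν := fun F => by
    rw [intervalIntegral.integral_of_le hL.le, integral_Ioc_eq_integral_Ioo]
  have hwL0 : 0 ≤ w L := zero_le_one.trans (hw1 L)
  have sys : KdvSys ν Y g T (1 / 2 + M + (1 + L) ^ 2 * M ^ 2 / 6) := by
    refine ⟨?_, ⟨w L * M, ?_⟩, ?_, ?_, ?_, ?_, by positivity, ?_⟩
    · intro s
      refine Measurable.indicator ?_ measurableSet_Ioo
      have : Continuous (fun x => Ycl x s) := hYc.comp (by fun_prop : Continuous fun x : ℝ => (x, s))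
      exact (hwc.mul this).measurable
    · intro s x
      by_cases hx : x ∈ Ioo 0 L
      · rw [hYin s x hx, abs_mul]
        exact mul_le_mul (hwL x (Ioo_subset_Icc_self hx)) (hYM x s) (abs_nonneg _) hwL0
      · rw [hYout s x hx, abs_zero]
        positivity
    · have hm := measurable_deriv_with_param hYc
      have h1 : Measurable (fun p : ℝ × ℝ => w p.1 * deriv (Ycl p.1) p.2) :=
        (hwc.measurable.comp measurable_fst).mul hm
      have h2 := h1.indicator (measurable_fst (measurableSet_Ioo (a := (0:ℝ)) (b := L)))
      exact h2
    · intro s hs x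
      by_cases hx : x ∈ Ioo 0 L
      · rw [hgin s hs x hx]
        have := (hdw s hs x hx).const_mul (w x)
        exact this.congr_of_eventuallyEq (Eventually.of_forall fun r => hYin r x hx)
      · rw [hgout s x hx]
        exact (hasDerivAt_const s (0:ℝ)).congr_of_eventuallyEq
          (Eventually.of_forall fun r => hYout r x hx)
    · intro x
      by_cases hx : x ∈ Ioo 0 L
      · have h1 := (ht1 x (Ioo_subset_Icc_self hx)).continuousOn_derivWithin
          (uniqueDiffOn_Icc hT) (by norm_num)
        refine ((h1.mono Ioo_subset_Icc_self).const_mul (w x)).congr fun s hs => ?_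
        rw [hgin s hs x hx]
        have h2 := hpde s hs x hx
        congr 1
        simp only [hG]; linarith
      · exact continuousOn_const.congr fun s _ => hgout s x hx
    · intro s hs
      obtain ⟨n, hn⟩ := isCompact_Icc.exists_bound_of_continuousOn
        (hGc s (Ioo_subset_Icc_self hs))
      have hn0 : 0 ≤ n := (norm_nonneg _).trans (hn 0 ⟨le_rfl, hL.le⟩)
      refine ⟨w L * n, fun x => ?_⟩
      by_cases hx : x ∈ Ioo 0 L
      · rw [hgin s hs x hx, abs_mul]
        exact mul_le_mul (hwL x (Ioo_subset_Icc_self hx)) (hn x (Ioo_subset_Icc_self hx))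
          (abs_nonneg _) hwL0
      · rw [hgout s x hx, abs_zero]
        positivity
    · intro s hs r hr
      have hs' := Ioo_subset_Icc_self hs
      have hr' := Ioo_subset_Icc_self hr
      have key := kdv_energy hL (prof s hs') (prof r hr') (hM s hs') (hM r hr')
      rw [hint, hint] at key
      have e1 : ∫ x, (Y s x - Y r x) * (g s x - g r x) ∂ν =
          ∫ x, (1 + x) * ((y s x - y r x) * (G s x - G r x)) ∂ν := by
        apply setIntegral_congr_fun measurableSet_Ioo
        intro x hx
        have hx' := Ioo_subset_Icc_self hx
        simp only
        rw [hYin s x hx, hYin r x hx, hgin s hs x hx, hgin r hr x hx, hYeq s hs' x hx',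
          hYeq r hr' x hx']
        have := hw2 x
        rw [abs_of_pos hx.1] at this
        rw [← this]
        ring
      have e2 : ∫ x, (Y s x - Y r x) ^ 2 ∂ν = ∫ x, (1 + x) * (y s x - y r x) ^ 2 ∂ν := by
        apply setIntegral_congr_fun measurableSet_Ioo
        intro x hx
        have hx' := Ioo_subset_Icc_self hx
        simp only
        rw [hYin s x hx, hYin r x hx, hYeq s hs' x hx', hYeq r hr' x hx']
        have := hw2 x
        rw [abs_of_pos hx.1] at this
        rw [← this]
        ring
      rw [e1, e2]
      exact key
  have cphi : Continuous phiKdV := by unfold phiKdV; fun_prop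
  have hψ : KdvBM (fun x => phiKdV x / w x) := by
    refine ⟨cphi.measurable.div hwc.measurable, 2 / Real.sqrt (3 * Real.pi), fun x => ?_⟩
    rw [abs_div, abs_of_nonneg (zero_le_one.trans (hw1 x))]
    refine (div_le_self (abs_nonneg _) (hw1 x)).trans ?_
    unfold phiKdV
    rw [abs_div, abs_of_nonneg (Real.sqrt_nonneg (3 * Real.pi))]
    gcongr
    rw [abs_le]
    constructor <;> linarith [Real.neg_one_le_cos x, Real.cos_le_one x]
  have hmain := sys.main ht hψ
  have hw0 : ∀ x, w x ≠ 0 := fun x => (zero_lt_one.trans_le (hw1 x)).ne'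
  have e1 : ∫ x, g t x * (phiKdV x / w x) ∂ν =
      (1 / 2 : ℝ) * ∫ x in (0:ℝ)..L, (y t x) ^ 2 * deriv phiKdV x := by
    rw [← kdv_proj (prof t (Ioo_subset_Icc_self ht)), hint]
    apply setIntegral_congr_fun measurableSet_Ioo
    intro x hx
    simp only
    rw [hgin t ht x hx]
    have := hw0 x
    simp only [hG]
    field_simp
  rw [e1] at hmain
  refine HasDerivAt.hasDerivWithinAt (hmain.congr_of_eventuallyEq ?_)
  filter_upwards [Icc_mem_nhds ht.1 ht.2] with s hs
  rw [hint]
  apply setIntegral_congr_fun measurableSet_Ioo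
  intro x hx
  simp only
  rw [hYin s x hx, hYeq s hs x (Ioo_subset_Icc_self hx)]
  have := hw0 x
  field_simp
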